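/- Let Ω ⊆ ℝ² be a nonempty open set that is connected and simply connected, and let A : Ω → ℝ^{2×2} be continuously differentiable with A(x) symmetric for all x and uniformly elliptic: there exist constants 0 < λ ≤ Λ with λ|ξ|² ≤ ⟨A(x)ξ, ξ⟩ ≤ Λ|ξ|² for all x ∈ Ω and ξ ∈ ℝ². Let u, ũ : ℝ² → ℝ be twice continuously differentiable on Ω and satisfy div(A²∇u)(x) = div(A²∇ũ)(x) for all x ∈ Ω. Then: (i) there exists a twice continuously differentiable φ : Ω → ℝ with A(x)²(∇u(x) − ∇ũ(x)) = curl φ(x) for all x ∈ Ω (equivalently A∇(u−ũ) = A^{-1} curl φ); and (ii) for every such φ and every differentiable u_c : Ω → ℝ with ∇u_c(x) = ∇ũ(x) + A(x)^{-2} curl φ(x) for all x ∈ Ω, there exists a constant C ∈ ℝ such that u_c(x) = u(x) + C for all x ∈ Ω. -/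

import Mathlib

/-!
Put `V = A²(∇u - ∇ũ)`, a `C¹` field with zero divergence. The 1-form `-V₂ dx₁ + V₁ dx₂` is then
closed, and a primitive `φ` of it satisfies `curl φ = V`; it is `C²` because its derivative is `C¹`.
Primitives exist locally by the Poincaré lemma on convex sets. To globalise, the germs of local
primitives are organised into a fibre bundle over `Ω` with discrete fibre `ℝ` (`primitiveCore`),
that is, a covering space of `Ω`. Since `Ω` is simply connected, the identity of `Ω` lifts to a
section of this covering, which is a global primitive (`exists_primitive_of_simplyConnected`).

For the uniqueness part, ellipticity makes `A²` invertible (`det_ne_zero_of_elliptic`), so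
`A⁻² curl φ = ∇u - ∇ũ` and `∇u_c = ∇u`; functions with equal gradients on a connected open set
differ by a constant.
-/

open MeasureTheory Set

/-- First partial derivative ∂f/∂x₁. -/
noncomputable def pd1 (f : ℝ × ℝ → ℝ) (x : ℝ × ℝ) : ℝ := fderiv ℝ f x (1, 0)

/-- Second partial derivative ∂f/∂x₂. -/
noncomputable def pd2 (f : ℝ × ℝ → ℝ) (x : ℝ × ℝ) : ℝ := fderiv ℝ f x (0, 1)

/-- Gradient of a scalar function on ℝ². -/
noncomputable def grad2 (f : ℝ × ℝ → ℝ) (x : ℝ × ℝ) : ℝ × ℝ := (pd1 f x, pd2 f x)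

/-- Vector curl of a scalar function on ℝ²: curl φ = (∂φ/∂x₂, −∂φ/∂x₁). -/
noncomputable def scurl (f : ℝ × ℝ → ℝ) (x : ℝ × ℝ) : ℝ × ℝ := (pd2 f x, -pd1 f x)

/-- Divergence of a vector field on ℝ²: div F = ∂F₁/∂x₁ + ∂F₂/∂x₂. -/
noncomputable def div2 (F : ℝ × ℝ → ℝ × ℝ) (x : ℝ × ℝ) : ℝ :=
  pd1 (fun y => (F y).1) x + pd2 (fun y => (F y).2) x

/-- Euclidean dot product on ℝ². -/
def dot2 (a b : ℝ × ℝ) : ℝ := a.1 * b.1 + a.2 * b.2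

/-- Matrix-vector multiplication of a 2×2 real matrix with a vector in ℝ². -/
def mvMul (M : Matrix (Fin 2) (Fin 2) ℝ) (p : ℝ × ℝ) : ℝ × ℝ :=
  (M 0 0 * p.1 + M 0 1 * p.2, M 1 0 * p.1 + M 1 1 * p.2)

/-- The real line with the discrete topology: the fibre of the covering space of germs of
primitives, which are determined up to an additive constant. -/
def DiscreteLine : Type := ℝ

instance : TopologicalSpace DiscreteLine := ⊥

instance : DiscreteTopology DiscreteLine := ⟨rfl⟩

/-- The covering space of germs of primitives of a 1-form `ω` on an open set `s`. Here
`F i` is a primitive of `ω` on the ball of radius `r i` about `i`, and the coordinate `v` in the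
chart with index `i` over a point `x` stands for the germ of `F i + v` at `x`. Passing to the chart
with index `j` thus adds `F i x - F j x`, which is locally constant in `x`. -/
noncomputable def primitiveCore {E : Type*} [NormedAddCommGroup E] [NormedSpace ℝ E]
    {s : Set E} (ω : E → E →L[ℝ] ℝ) (r : s → ℝ) (hr : ∀ i, 0 < r i) (F : s → E → ℝ)
    (hF : ∀ i : s, ∀ a ∈ Metric.ball (i : E) (r i), HasFDerivAt (F i) (ω a) a) :
    FiberBundleCore s s DiscreteLine where
  baseSet i := {x | (x : E) ∈ Metric.ball (i : E) (r i)}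
  isOpen_baseSet i := Metric.isOpen_ball.preimage continuous_subtype_val
  indexAt x := x
  mem_baseSet_at x := Metric.mem_ball_self (hr x)
  coordChange i j x v := (show ℝ from v) + F i x - F j x
  coordChange_self i x _ v := add_sub_cancel_right (show ℝ from v) (F i x)
  coordChange_comp i j k x _ v := by
    change (show ℝ from v) + F i x - F j x + F j x - F k x = (show ℝ from v) + F i x - F k x
    ring
  continuousOn_coordChange i j := by
    rintro ⟨x, v⟩ ⟨⟨hi, hj⟩, -⟩
    -- On the intersection of two balls, which is convex, two primitives differ by a constant.
    obtain ⟨c, hc⟩ := (Metric.isOpen_ball.inter Metric.isOpen_ball).exists_eq_add_of_fderiv_eq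
      (s := Metric.ball (i : E) (r i) ∩ Metric.ball (j : E) (r j))
      ((convex_ball _ _).inter (convex_ball _ _)).isPreconnected
      (fun a ha => (hF i a ha.1).differentiableAt.differentiableWithinAt)
      (fun a ha => (hF j a ha.2).differentiableAt.differentiableWithinAt)
      (fun a ha => (hF i a ha.1).fderiv.trans (hF j a ha.2).fderiv.symm)
    refine ContinuousAt.continuousWithinAt ?_
    refine (continuousAt_const (X := s × DiscreteLine) (Y := DiscreteLine)
      (y := (show DiscreteLine from ((show ℝ from v) + c : ℝ)))).congr ?_
    have hU : IsOpen ((fun y : s => (y : E)) ⁻¹'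
        (Metric.ball (i : E) (r i) ∩ Metric.ball (j : E) (r j))) :=
      (Metric.isOpen_ball.inter Metric.isOpen_ball).preimage continuous_subtype_val
    filter_upwards [(hU.prod (isOpen_discrete {v})).mem_nhds ⟨⟨hi, hj⟩, rfl⟩]
    rintro ⟨y, w⟩ ⟨hy, rfl⟩
    have h := hc hy
    change (show ℝ from w) + c = (show ℝ from w) + F i y - F j y
    simp only at h
    rw [h]
    ring

/-- Poincaré lemma for 1-forms on an open simply connected set: a global section of the covering
space `primitiveCore` exists by lifting the identity map, and it is a global primitive. -/
theorem exists_primitive_of_simplyConnected {E : Type*} [NormedAddCommGroup E] [NormedSpace ℝ E]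
    {s : Set E} (hs : IsOpen s) [SimplyConnectedSpace s] {ω : E → E →L[ℝ] ℝ}
    (hω : DifferentiableOn ℝ ω s)
    (hdω : ∀ a ∈ s, ∀ x y, fderiv ℝ ω a x y = fderiv ℝ ω a y x) :
    ∃ f : E → ℝ, ∀ a ∈ s, HasFDerivAt f (ω a) a := by
  classical
  have hloc : ∀ i : s, ∃ r > 0, ∃ f : E → ℝ,
      ∀ a ∈ Metric.ball (i : E) r, HasFDerivAt f (ω a) a := by
    intro i
    obtain ⟨r, hr, hrs⟩ := Metric.isOpen_iff.1 hs i i.2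
    exact ⟨r, hr, (convex_ball _ _).exists_forall_hasFDerivAt_of_fderiv_symmetric
      Metric.isOpen_ball (hω.mono hrs) fun a ha => hdω a (hrs ha)⟩
  choose r hr F hF using hloc
  let Z := primitiveCore ω r hr F hF
  have : LocallyPathConnectedSpace s := hs.locallyPathConnectedSpace
  have hcov : IsCoveringMap Z.proj := FiberBundle.isCoveringMap (F := DiscreteLine) (E := Z.Fiber)
  obtain ⟨x₀⟩ : Nonempty s := inferInstance
  obtain ⟨σ, ⟨-, hσ⟩, -⟩ := hcov.existsUnique_continuousMap_lifts (ContinuousMap.id s) x₀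
    (⟨x₀, (show DiscreteLine from (0 : ℝ))⟩ : Z.TotalSpace) rfl
  have hσ1 : ∀ x, (σ x).1 = x := fun x => congr_fun hσ x
  let g : s → ℝ := fun x => (show ℝ from (σ x).2) + F x x
  -- In the chart with index `a`, the section is locally constant, so `g` is `F a` plus a constant
  -- near `a`.
  have hg : ∀ a : s, ∃ c : ℝ, ∀ᶠ x in nhds a, g x = F a x + c := by
    intro a
    have hcont : ContinuousAt (fun x => (Z.localTriv a (σ x)).2) a := by
      refine continuous_snd.continuousAt.comp (ContinuousAt.comp ?_ σ.continuous.continuousAt)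
      refine (Z.localTriv a).continuousAt ?_
      rw [Z.mem_localTriv_source, hσ1]
      exact Z.mem_baseSet_at a
    refine ⟨(show ℝ from (Z.localTriv a (σ a)).2), ?_⟩
    filter_upwards [hcont.eventually ((isOpen_discrete {(Z.localTriv a (σ a)).2}).mem_nhds rfl)]
      with x hx
    have h1 : (show ℝ from (Z.localTriv a (σ x)).2)
        = (show ℝ from (σ x).2) + F (σ x).1 (σ x).1 - F a (σ x).1 := rfl
    rw [hσ1] at h1
    have h2 : (show ℝ from (Z.localTriv a (σ x)).2) = (show ℝ from (Z.localTriv a (σ a)).2) := hx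
    rw [← h2, h1]
    change (show ℝ from (σ x).2) + F x x = _
    ring
  refine ⟨fun x => if h : x ∈ s then g ⟨x, h⟩ else 0, fun a ha => ?_⟩
  obtain ⟨c, hc⟩ := hg ⟨a, ha⟩
  refine ((hF ⟨a, ha⟩ a (Metric.mem_ball_self (hr _))).add_const c).congr_of_eventuallyEq ?_
  rw [nhds_subtype_eq_comap, Filter.eventually_comap] at hc
  filter_upwards [hc, hs.mem_nhds ha] with x hx hxs
  simpa [hxs] using hx ⟨x, hxs⟩ rfl

/-- The covector `v ↦ -V₂ v₁ + V₁ v₂`, which is `dφ` when `V = curl φ`. -/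
noncomputable def curlForm (V : ℝ × ℝ) : ℝ × ℝ →L[ℝ] ℝ :=
  V.1 • ContinuousLinearMap.snd ℝ ℝ ℝ - V.2 • ContinuousLinearMap.fst ℝ ℝ ℝ

/-- A divergence-free `C¹` field on a simply connected open set is the curl of a `C²` function. -/
theorem exists_scurl_eq {Ω : Set (ℝ × ℝ)} (hΩ : IsOpen Ω) [SimplyConnectedSpace Ω]
    {V : ℝ × ℝ → ℝ × ℝ} (hV : ContDiffOn ℝ 1 V Ω) (hdiv : ∀ x ∈ Ω, div2 V x = 0) :
    ∃ φ : ℝ × ℝ → ℝ, ContDiffOn ℝ 2 φ Ω ∧ ∀ x ∈ Ω, V x = scurl φ x := by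
  have hform : ContDiffOn ℝ 1 (fun x => curlForm (V x)) Ω :=
    (hV.fst.smul contDiffOn_const).sub (hV.snd.smul contDiffOn_const)
  have hVd : ∀ x ∈ Ω, DifferentiableAt ℝ V x := fun x hx =>
    (hV.differentiableOn one_ne_zero).differentiableAt (hΩ.mem_nhds hx)
  obtain ⟨φ, hφ⟩ := exists_primitive_of_simplyConnected hΩ
    (hform.differentiableOn one_ne_zero) (by
      intro a ha x y
      have h1 := (hVd a ha).fst.hasFDerivAt
      have h2 := (hVd a ha).snd.hasFDerivAt
      have hd := ((h1.smul_const (ContinuousLinearMap.snd ℝ ℝ ℝ)).sub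
        (h2.smul_const (ContinuousLinearMap.fst ℝ ℝ ℝ))).fderiv
      have h0 := hdiv a ha
      simp only [div2, pd1, pd2] at h0
      have hd' : fderiv ℝ (fun x => curlForm (V x)) a = _ := hd
      rw [hd']
      set L := fderiv ℝ (fun y => (V y).1) a
      set M := fderiv ℝ (fun y => (V y).2) a
      have hL : ∀ v : ℝ × ℝ, L v = v.1 * L (1, 0) + v.2 * L (0, 1) := fun v => by
        rw [← smul_eq_mul, ← smul_eq_mul, ← map_smul, ← map_smul, ← map_add]; simp
      have hM : ∀ v : ℝ × ℝ, M v = v.1 * M (1, 0) + v.2 * M (0, 1) := fun v => by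
        rw [← smul_eq_mul, ← smul_eq_mul, ← map_smul, ← map_smul, ← map_add]; simp
      simp only [sub_apply, ContinuousLinearMap.smulRight_apply,
        smul_apply, ContinuousLinearMap.coe_fst', ContinuousLinearMap.coe_snd',
        smul_eq_mul]
      rw [hL x, hL y, hM x, hM y]
      linear_combination (x.1 * y.2 - x.2 * y.1) * h0)
  refine ⟨φ, ?_, fun x hx => ?_⟩
  · refine (contDiffOn_succ_iff_fderiv_of_isOpen (n := 1) hΩ).2
      ⟨fun x hx => (hφ x hx).differentiableAt.differentiableWithinAt, by simp, ?_⟩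
    exact hform.congr fun x hx => (hφ x hx).fderiv
  · simp [scurl, pd1, pd2, (hφ x hx).fderiv, curlForm]

theorem contDiffOn_grad2 {Ω : Set (ℝ × ℝ)} (hΩ : IsOpen Ω) {u : ℝ × ℝ → ℝ}
    (hu : ContDiffOn ℝ 2 u Ω) : ContDiffOn ℝ 1 (grad2 u) Ω := by
  have h := ((contDiffOn_succ_iff_fderiv_of_isOpen (n := 1) hΩ).1 hu).2.2
  exact (h.clm_apply contDiffOn_const).prodMk (h.clm_apply contDiffOn_const)

theorem contDiffOn_mvMul {Ω : Set (ℝ × ℝ)} {A : ℝ × ℝ → Matrix (Fin 2) (Fin 2) ℝ}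
    (hA : ∀ i j, ContDiffOn ℝ 1 (fun x => A x i j) Ω) {V : ℝ × ℝ → ℝ × ℝ}
    (hV : ContDiffOn ℝ 1 V Ω) : ContDiffOn ℝ 1 (fun x => mvMul (A x * A x) (V x)) Ω := by
  have hAA : ∀ i j, ContDiffOn ℝ 1 (fun x => (A x * A x) i j) Ω := fun i j => by
    simp only [Matrix.mul_apply]
    exact ContDiffOn.sum fun k _ => (hA i k).mul (hA k j)
  exact (((hAA 0 0).mul hV.fst).add ((hAA 0 1).mul hV.snd)).prodMk
    (((hAA 1 0).mul hV.fst).add ((hAA 1 1).mul hV.snd))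

theorem mvMul_sub (M : Matrix (Fin 2) (Fin 2) ℝ) (p q : ℝ × ℝ) :
    mvMul M (p - q) = mvMul M p - mvMul M q := by
  ext <;> simp [mvMul] <;> ring

theorem mvMul_mvMul (M N : Matrix (Fin 2) (Fin 2) ℝ) (p : ℝ × ℝ) :
    mvMul M (mvMul N p) = mvMul (M * N) p := by
  ext <;> simp [mvMul, Matrix.mul_apply, Fin.sum_univ_two] <;> ring

theorem mvMul_one (p : ℝ × ℝ) : mvMul 1 p = p := by
  ext <;> simp [mvMul]

theorem div2_sub {V W : ℝ × ℝ → ℝ × ℝ} {x : ℝ × ℝ} (hV : DifferentiableAt ℝ V x)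
    (hW : DifferentiableAt ℝ W x) : div2 (fun y => V y - W y) x = div2 V x - div2 W x := by
  simp only [div2, pd1, pd2, Prod.fst_sub, Prod.snd_sub]
  rw [fderiv_fun_sub hV.fst hW.fst, fderiv_fun_sub hV.snd hW.snd]
  simp only [sub_apply]
  ring

/-- Coercivity of the quadratic form makes the matrix nonsingular. -/
theorem det_ne_zero_of_elliptic {M : Matrix (Fin 2) (Fin 2) ℝ} {lam : ℝ} (hlam : 0 < lam)
    (h : ∀ ξ : ℝ × ℝ, lam * dot2 ξ ξ ≤ dot2 (mvMul M ξ) ξ) : M.det ≠ 0 := by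
  intro hdet
  rw [Matrix.det_fin_two] at hdet
  -- The columns of the adjugate of a singular matrix lie in its kernel; this is the second one.
  have h1 := h (-M 0 1, M 0 0)
  have h2 := h (1, 0)
  simp only [dot2, mvMul] at h1 h2
  have h3 : 0 < M 0 0 := by linarith
  have h4 : lam * (M 0 1 * M 0 1 + M 0 0 * M 0 0) ≤ 0 := by
    linear_combination h1 + M 0 0 * hdet
  nlinarith [mul_pos hlam (mul_pos h3 h3), mul_nonneg hlam.le (mul_self_nonneg (M 0 1))]

theorem fderiv_eq_of_grad2_eq {f g : ℝ × ℝ → ℝ} {x : ℝ × ℝ} (h : grad2 f x = grad2 g x) :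
    fderiv ℝ f x = fderiv ℝ g x := by
  simp only [grad2, pd1, pd2, Prod.mk.injEq] at h
  ext
  · simpa using h.1
  · simpa using h.2

/-- Variable-coefficient reconstruction: if div(A²∇u) = div(A²∇ũ) on a nonempty open
connected simply connected Ω, with A symmetric, C¹ and uniformly elliptic, then (i) there
is a C² potential φ with A²(∇u − ∇ũ) = curl φ on Ω, and (ii) for every such φ and every
differentiable u_c with ∇u_c = ∇ũ + A⁻² curl φ on Ω, u_c differs from u by a constant. -/
theorem variable_coefficient_reconstruction
    (Ω : Set (ℝ × ℝ)) (hΩ : IsOpen Ω) (hne : Ω.Nonempty)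
    (hconn : IsConnected Ω) (hsc : SimplyConnectedSpace Ω)
    (A : ℝ × ℝ → Matrix (Fin 2) (Fin 2) ℝ)
    (hA : ∀ i j, ContDiffOn ℝ 1 (fun x => A x i j) Ω)
    (hAsymm : ∀ x ∈ Ω, (A x).IsSymm)
    (lam Lam : ℝ) (hlam : 0 < lam) (hlamLam : lam ≤ Lam)
    (hell : ∀ x ∈ Ω, ∀ ξ : ℝ × ℝ,
      lam * dot2 ξ ξ ≤ dot2 (mvMul (A x) ξ) ξ ∧ dot2 (mvMul (A x) ξ) ξ ≤ Lam * dot2 ξ ξ)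
    (u ut : ℝ × ℝ → ℝ)
    (hu : ContDiffOn ℝ 2 u Ω) (hut : ContDiffOn ℝ 2 ut Ω)
    (heq : ∀ x ∈ Ω, div2 (fun y => mvMul (A y * A y) (grad2 u y)) x =
                    div2 (fun y => mvMul (A y * A y) (grad2 ut y)) x) :
    (∃ φ : ℝ × ℝ → ℝ, ContDiffOn ℝ 2 φ Ω ∧
        ∀ x ∈ Ω, mvMul (A x * A x) (grad2 u x - grad2 ut x) = scurl φ x) ∧
    (∀ φ : ℝ × ℝ → ℝ, ContDiffOn ℝ 2 φ Ω →
      (∀ x ∈ Ω, mvMul (A x * A x) (grad2 u x - grad2 ut x) = scurl φ x) →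
      ∀ uc : ℝ × ℝ → ℝ, DifferentiableOn ℝ uc Ω →
        (∀ x ∈ Ω, grad2 uc x = grad2 ut x + mvMul (A x * A x)⁻¹ (scurl φ x)) →
        ∃ C : ℝ, ∀ x ∈ Ω, uc x = u x + C) := by
  constructor
  · have h1 := contDiffOn_mvMul hA (contDiffOn_grad2 hΩ hu)
    have h2 := contDiffOn_mvMul hA (contDiffOn_grad2 hΩ hut)
    refine exists_scurl_eq (V := fun x => mvMul (A x * A x) (grad2 u x - grad2 ut x)) hΩ ?_ ?_
    · exact contDiffOn_mvMul hA ((contDiffOn_grad2 hΩ hu).sub (contDiffOn_grad2 hΩ hut))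
    · intro x hx
      simp only [mvMul_sub]
      rw [div2_sub ((h1.differentiableOn one_ne_zero).differentiableAt (hΩ.mem_nhds hx))
        ((h2.differentiableOn one_ne_zero).differentiableAt (hΩ.mem_nhds hx)), heq x hx, sub_self]
  · intro φ _ hφ uc huc hgrad
    refine hΩ.exists_eq_add_of_fderiv_eq hconn.isPreconnected huc
      (hu.differentiableOn two_ne_zero) fun x hx => fderiv_eq_of_grad2_eq ?_
    have hdet : IsUnit (A x * A x).det := by
      have h := det_ne_zero_of_elliptic hlam fun ξ => (hell x hx ξ).1
      rw [Matrix.det_mul]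
      exact (mul_ne_zero h h).isUnit
    rw [hgrad x hx, ← hφ x hx, mvMul_mvMul, Matrix.nonsing_inv_mul _ hdet, mvMul_one,
      add_sub_cancel]
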